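/- arXiv:2408.05741 — 5 statements merged into one kernel-verified Lean document; each statement's English description precedes it below -/
import Mathlib

section
/- Let n jobs be given, where job j has processing time p_j ∈ ℕ, weight w_j ∈ ℕ and deadline d̃_j ∈ ℕ. For J ⊆ {1,…,n} and t ∈ ℕ, define OPT[J,t] ∈ ℕ∞ as the minimum of ∑_{j∈J} w_j·C_j(π) over all linear orderings π of J, where jobs are processed consecutively without idle time starting at time t (so the k-th job in the order completes at C_{π(k)} = t + ∑_{l≤k} p_{π(l)}), subject to C_j(π) ≤ d̃_j for every j ∈ J; set OPT[J,t] = ∞ if no ordering is feasible, and OPT[∅,t] = 0. Then for every nonempty J ⊆ {1,…,n} and every t ∈ ℕ, OPT[J,t] = min_{j∈J} ( OPT[J∖{j}, t] + g_j ), where g_j = w_j·(t + p(J)) if t + p(J) ≤ d̃_j and g_j = ∞ otherwise, with p(J) = ∑_{k∈J} p_k and the convention x + ∞ = ∞. -/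
/-- Total weighted completion time of the jobs in the list, processed consecutively
without idle time starting at time `t`, in the order given by the list. -/
def wcCost {n : ℕ} (p w : Fin n → ℕ) : ℕ → List (Fin n) → ℕ
  | _, [] => 0
  | t, j :: l => w j * (t + p j) + wcCost p w (t + p j) l

/-- Every job of the list meets its deadline when the jobs are processed consecutively
without idle time starting at time `t`. -/
def deadlineFeasible {n : ℕ} (p d : Fin n → ℕ) : ℕ → List (Fin n) → Prop
  | _, [] => True
  | t, j :: l => t + p j ≤ d j ∧ deadlineFeasible p d (t + p j) l

/-- `OPT p w d J t` : minimum of `∑_{j ∈ J} w j * C j` over all orderings of `J`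
processed consecutively without idle time starting at time `t`, subject to the
deadline constraints (`⊤` if no feasible ordering exists). -/
noncomputable def OPT {n : ℕ} (p w d : Fin n → ℕ) (J : Finset (Fin n)) (t : ℕ) : ℕ∞ :=
  sInf { v : ℕ∞ | ∃ l : List (Fin n), l.Nodup ∧ l.toFinset = J ∧
    deadlineFeasible p d t l ∧ v = (wcCost p w t l : ℕ∞) }

/-!
Charging a late job the cost `⊤` absorbs the deadlines into the objective, so `OPT` becomes an
unconstrained minimum of `∑ j, f j (C j)` over all orderings, for suitable `f j : ℕ → ℕ∞`. For
arbitrary `f`, the last job `j` completes at `t + p(J)` whatever the order of the other jobs, and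
its cost does not affect theirs. Splitting the minimum according to the last job gives the
recurrence, because addition of a constant in `ℕ∞` commutes with infima, including empty ones.
-/

section IsOrdering

variable {ι : Type*} [DecidableEq ι] {l : List ι} {j : ι} {J : Finset ι}

/-- The list `l` is a linear ordering of the finite set `J`: it enumerates `J` without
repetition. -/
def IsOrdering (l : List ι) (J : Finset ι) : Prop :=
  l.Nodup ∧ l.toFinset = J

theorem IsOrdering.sum_map {T : Type*} [AddCommMonoid T] (h : IsOrdering l J)
    (p : ι → T) : (l.map p).sum = ∑ k ∈ J, p k := by
  rw [← h.2, List.sum_toFinset p h.1]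

theorem isOrdering_append_singleton :
    IsOrdering (l ++ [j]) J ↔ j ∈ J ∧ IsOrdering l (J.erase j) := by
  simp only [IsOrdering, List.nodup_append, Finset.ext_iff, List.mem_toFinset, Finset.mem_erase]
  grind

theorem IsOrdering.exists_eq_append_singleton (h : IsOrdering l J) (hJ : J.Nonempty) :
    ∃ l' j, l = l' ++ [j] := by
  have l_ne_nil : l ≠ [] := by
    rwa [← List.toFinset_nonempty_iff, h.2]
  exact (List.eq_nil_or_concat' l).resolve_left l_ne_nil

theorem iInf_isOrdering_eq_iInf_last {α : Type*} [CompleteLattice α] (hJ : J.Nonempty)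
    (F : List ι → α) :
    ⨅ (l) (_ : IsOrdering l J), F l =
      ⨅ j ∈ J, ⨅ (l) (_ : IsOrdering l (J.erase j)), F (l ++ [j]) := by
  apply le_antisymm
  · exact le_iInf₂ fun j hj ↦ le_iInf₂ fun l hl ↦
      iInf₂_le (l ++ [j]) (isOrdering_append_singleton.2 ⟨hj, hl⟩)
  · refine le_iInf₂ fun l hl ↦ ?_
    obtain ⟨l, j, rfl⟩ := hl.exists_eq_append_singleton hJ
    obtain ⟨hj, hl⟩ := isOrdering_append_singleton.1 hl
    exact (iInf₂_le j hj).trans (iInf₂_le l hl)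

end IsOrdering

section ScheduleCost

variable {ι T : Type*}

/-- The total cost `∑ j, f j (C j)` of processing the jobs of a list in order, consecutively from
a given start time, where `p j` is the processing time of job `j` and `f j C` the cost of
completing it at time `C`. The value `⊤` of `f j C` encodes that this completion is forbidden. -/
def scheduleCost [Add T] (p : ι → T) (f : ι → T → ℕ∞) : T → List ι → ℕ∞
  | _, [] => 0
  | t, j :: l => f j (t + p j) + scheduleCost p f (t + p j) l

theorem scheduleCost_append_singleton [AddMonoid T] (p : ι → T) (f : ι → T → ℕ∞) (t : T)
    (l : List ι) (j : ι) :
    scheduleCost p f t (l ++ [j]) =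
      scheduleCost p f t l + f j (t + ((l ++ [j]).map p).sum) := by
  induction l generalizing t with
  | nil => simp [scheduleCost]
  | cons a l ih =>
    simp only [List.cons_append, scheduleCost, ih, List.map_cons, List.sum_cons, add_assoc]

/-- The minimum of `scheduleCost` over all orderings of the job set `J`, starting at time `t`. -/
noncomputable def minScheduleCost [DecidableEq ι] [Add T] (p : ι → T) (f : ι → T → ℕ∞)
    (J : Finset ι) (t : T) : ℕ∞ :=
  ⨅ (l) (_ : IsOrdering l J), scheduleCost p f t l

theorem stmt0_general [DecidableEq ι] [AddCommMonoid T] (p : ι → T) (f : ι → T → ℕ∞)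
    {J : Finset ι} (hJ : J.Nonempty) (t : T) :
    minScheduleCost p f J t =
      ⨅ j ∈ J, (minScheduleCost p f (J.erase j) t + f j (t + ∑ k ∈ J, p k)) := by
  have cost_eq {j : ι} (hj : j ∈ J) {l : List ι} (hl : IsOrdering l (J.erase j)) :
      scheduleCost p f t (l ++ [j]) = scheduleCost p f t l + f j (t + ∑ k ∈ J, p k) := by
    rw [scheduleCost_append_singleton, (isOrdering_append_singleton.2 ⟨hj, hl⟩).sum_map]
  calc minScheduleCost p f J t
    _ = ⨅ j ∈ J, ⨅ (l) (_ : IsOrdering l (J.erase j)), scheduleCost p f t (l ++ [j]) :=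
      iInf_isOrdering_eq_iInf_last hJ _
    _ = ⨅ j ∈ J, ⨅ (l) (_ : IsOrdering l (J.erase j)),
          (scheduleCost p f t l + f j (t + ∑ k ∈ J, p k)) :=
      biInf_congr fun _ hj ↦ biInf_congr fun _ hl ↦ cost_eq hj hl
    _ = ⨅ j ∈ J, (minScheduleCost p f (J.erase j) t + f j (t + ∑ k ∈ J, p k)) := by
      simp only [minScheduleCost, ENat.iInf₂_add]

end ScheduleCost

/-- The weighted completion time of a job `j` completed at time `C`, with a missed deadline
encoded as the cost `⊤`. At `C = t + p(J)` this is the `g_j` of the recurrence. -/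
def deadlineCost {ι : Type*} (w d : ι → ℕ) (j : ι) (C : ℕ) : ℕ∞ :=
  if C ≤ d j then ((w j * C : ℕ) : ℕ∞) else ⊤

section Deadlines

variable {n : ℕ} (p w d : Fin n → ℕ)

theorem scheduleCost_deadlineCost (t : ℕ) (l : List (Fin n)) :
    scheduleCost p (deadlineCost w d) t l =
      ⨅ _ : deadlineFeasible p d t l, (wcCost p w t l : ℕ∞) := by
  induction l generalizing t with
  | nil => simp [scheduleCost, deadlineFeasible, wcCost]
  | cons j l ih =>
    rw [scheduleCost, ih, deadlineCost]
    split_ifs with hj <;> simp [deadlineFeasible, wcCost, hj, ENat.add_iInf]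

theorem OPT_eq_minScheduleCost (J : Finset (Fin n)) (t : ℕ) :
    OPT p w d J t = minScheduleCost p (deadlineCost w d) J t := by
  simp only [minScheduleCost, scheduleCost_deadlineCost, IsOrdering, iInf_and]
  apply le_antisymm
  · exact le_iInf fun l ↦ le_iInf fun hl ↦ le_iInf fun hlJ ↦ le_iInf fun hf ↦
      sInf_le ⟨l, hl, hlJ, hf, rfl⟩
  · refine le_sInf ?_
    rintro _ ⟨l, hl, hlJ, hf, rfl⟩
    exact iInf_le_of_le l <| iInf_le_of_le hl <| iInf_le_of_le hlJ <| iInf_le _ hf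

end Deadlines

theorem stmt0 {n : ℕ} (p w d : Fin n → ℕ) (J : Finset (Fin n)) (hJ : J.Nonempty) (t : ℕ) :
    OPT p w d J t =
      ⨅ j ∈ J, (OPT p w d (J.erase j) t +
        if t + ∑ k ∈ J, p k ≤ d j
          then ((w j * (t + ∑ k ∈ J, p k) : ℕ) : ℕ∞) else ⊤) := by
  simp only [OPT_eq_minScheduleCost]
  exact stmt0_general p (deadlineCost w d) hJ t
end

section
/- Let n jobs be given, where job j has processing time p_j ∈ ℕ, weight w_j ∈ ℕ and deadline d̃_j ∈ ℕ. For J ⊆ {1,…,n} and t ∈ ℕ, define OPT[J,t] ∈ ℕ∞ as the minimum of ∑_{j∈J} w_j·C_j(π) over all linear orderings π of J processed consecutively without idle time starting at time t, subject to C_j(π) ≤ d̃_j for every j ∈ J (∞ if no feasible ordering, and OPT[∅,t] = 0). Then for every J ⊆ {1,…,n} of even cardinality and every t ∈ ℕ, OPT[J,t] = min over all X ⊆ J with |X| = |J|/2 of ( OPT[X, t] + OPT[J∖X, t + p(X)] ), where p(X) = ∑_{k∈X} p_k. -/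
/-!
Cut an ordering of `J` after its first `m` jobs. With `X` the set of these jobs, the second block
starts at time `t + p(X)` whatever the order inside `X`, so cost and feasibility of the whole
decompose into those of an ordering of `X` started at `t` and an ordering of `J \ X` started at
`t + p(X)`. Conversely, orderings of `X` and `J \ X` concatenate to an ordering of `J`.
-/

section

variable {n : ℕ} {p w d : Fin n → ℕ} {J X Y : Finset (Fin n)} {t : ℕ} {l l₁ l₂ : List (Fin n)}

theorem wcCost_append (p w : Fin n → ℕ) (t : ℕ) (l₁ l₂ : List (Fin n)) :
    wcCost p w t (l₁ ++ l₂) = wcCost p w t l₁ + wcCost p w (t + (l₁.map p).sum) l₂ := by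
  induction l₁ generalizing t with
  | nil => simp [wcCost]
  | cons j l ih => simp [wcCost, ih, add_assoc]

theorem deadlineFeasible_append :
    deadlineFeasible p d t (l₁ ++ l₂) ↔
      deadlineFeasible p d t l₁ ∧ deadlineFeasible p d (t + (l₁.map p).sum) l₂ := by
  induction l₁ generalizing t with
  | nil => simp [deadlineFeasible]
  | cons j l ih => simp [deadlineFeasible, ih, add_assoc, and_assoc]

/-- `IsFeasibleOrdering p d J t l`: the list `l` is a linear ordering of the job set `J` that meets
all deadlines when started at time `t`. These are the competitors in the minimum `OPT p w d J t`. -/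
structure IsFeasibleOrdering (p d : Fin n → ℕ) (J : Finset (Fin n)) (t : ℕ)
    (l : List (Fin n)) : Prop where
  nodup : l.Nodup
  toFinset_eq : l.toFinset = J
  deadlineFeasible : deadlineFeasible p d t l

namespace IsFeasibleOrdering

theorem length_eq_card (h : IsFeasibleOrdering p d J t l) : l.length = J.card := by
  rw [← h.toFinset_eq, List.toFinset_card_of_nodup h.nodup]

theorem sum_map_eq_sum (h : IsFeasibleOrdering p d J t l) : (l.map p).sum = ∑ k ∈ J, p k := by
  rw [← h.toFinset_eq, List.sum_toFinset p h.nodup]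

theorem append (h₁ : IsFeasibleOrdering p d X t l₁)
    (h₂ : IsFeasibleOrdering p d Y (t + ∑ k ∈ X, p k) l₂) (hXY : Disjoint X Y) :
    IsFeasibleOrdering p d (X ∪ Y) t (l₁ ++ l₂) where
  nodup := by
    refine h₁.nodup.append h₂.nodup (List.disjoint_toFinset_iff_disjoint.1 ?_)
    rwa [h₁.toFinset_eq, h₂.toFinset_eq]
  toFinset_eq := by rw [List.toFinset_append, h₁.toFinset_eq, h₂.toFinset_eq]
  deadlineFeasible := deadlineFeasible_append.2
    ⟨h₁.deadlineFeasible, h₁.sum_map_eq_sum ▸ h₂.deadlineFeasible⟩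

theorem of_append_left (h : IsFeasibleOrdering p d J t (l₁ ++ l₂)) :
    IsFeasibleOrdering p d l₁.toFinset t l₁ where
  nodup := h.nodup.of_append_left
  toFinset_eq := rfl
  deadlineFeasible := (deadlineFeasible_append.1 h.deadlineFeasible).1

theorem of_append_right (h : IsFeasibleOrdering p d J t (l₁ ++ l₂)) :
    IsFeasibleOrdering p d (J \ l₁.toFinset) (t + ∑ k ∈ l₁.toFinset, p k) l₂ where
  nodup := h.nodup.of_append_right
  toFinset_eq := by
    have hdisj : Disjoint l₁.toFinset l₂.toFinset :=
      List.disjoint_toFinset_iff_disjoint.2 (List.disjoint_of_nodup_append h.nodup)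
    rw [← h.toFinset_eq, List.toFinset_append, Finset.union_sdiff_cancel_left hdisj]
  deadlineFeasible :=
    h.of_append_left.sum_map_eq_sum ▸ (deadlineFeasible_append.1 h.deadlineFeasible).2

theorem OPT_le (h : IsFeasibleOrdering p d J t l) : OPT p w d J t ≤ wcCost p w t l :=
  sInf_le ⟨l, h.nodup, h.toFinset_eq, h.deadlineFeasible, rfl⟩

end IsFeasibleOrdering

theorem le_OPT_iff {c : ℕ∞} :
    c ≤ OPT p w d J t ↔ ∀ l, IsFeasibleOrdering p d J t l → c ≤ wcCost p w t l := by
  refine ⟨fun hc l hl => hc.trans hl.OPT_le, fun hc => le_sInf ?_⟩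
  rintro _ ⟨l, hn, hJ, hd, rfl⟩
  exact hc l ⟨hn, hJ, hd⟩

theorem exists_isFeasibleOrdering_wcCost_eq_OPT (h : OPT p w d J t ≠ ⊤) :
    ∃ l, IsFeasibleOrdering p d J t l ∧ (wcCost p w t l : ℕ∞) = OPT p w d J t := by
  have hne : { v : ℕ∞ | ∃ l : List (Fin n), l.Nodup ∧ l.toFinset = J ∧
      deadlineFeasible p d t l ∧ v = (wcCost p w t l : ℕ∞) }.Nonempty := by
    by_contra hempty
    exact h (by rw [OPT, Set.not_nonempty_iff_eq_empty.1 hempty, sInf_empty])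
  obtain ⟨l, hn, hJ, hd, hcost⟩ := csInf_mem hne
  exact ⟨l, ⟨hn, hJ, hd⟩, hcost.symm⟩

theorem OPT_union_le (p w d : Fin n → ℕ) (t : ℕ) (hXY : Disjoint X Y) :
    OPT p w d (X ∪ Y) t ≤ OPT p w d X t + OPT p w d Y (t + ∑ k ∈ X, p k) := by
  rcases eq_or_ne (OPT p w d X t) ⊤ with hX | hX
  · simp [hX]
  rcases eq_or_ne (OPT p w d Y (t + ∑ k ∈ X, p k)) ⊤ with hY | hY
  · simp [hY]
  obtain ⟨l₁, h₁, hcost₁⟩ := exists_isFeasibleOrdering_wcCost_eq_OPT hX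
  obtain ⟨l₂, h₂, hcost₂⟩ := exists_isFeasibleOrdering_wcCost_eq_OPT hY
  calc OPT p w d (X ∪ Y) t ≤ wcCost p w t (l₁ ++ l₂) := (h₁.append h₂ hXY).OPT_le
    _ = OPT p w d X t + OPT p w d Y (t + ∑ k ∈ X, p k) := by
      rw [wcCost_append, h₁.sum_map_eq_sum, Nat.cast_add, hcost₁, hcost₂]

theorem IsFeasibleOrdering.OPT_add_OPT_sdiff_le (h : IsFeasibleOrdering p d J t (l₁ ++ l₂)) :
    OPT p w d l₁.toFinset t + OPT p w d (J \ l₁.toFinset) (t + ∑ k ∈ l₁.toFinset, p k) ≤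
      wcCost p w t (l₁ ++ l₂) := by
  rw [wcCost_append, h.of_append_left.sum_map_eq_sum, Nat.cast_add]
  exact add_le_add h.of_append_left.OPT_le h.of_append_right.OPT_le

theorem IsFeasibleOrdering.exists_subset_card_eq_OPT_add_OPT_sdiff_le
    (h : IsFeasibleOrdering p d J t l) {m : ℕ} (hm : m ≤ J.card) :
    ∃ X : Finset (Fin n), (X ⊆ J ∧ X.card = m) ∧
      OPT p w d X t + OPT p w d (J \ X) (t + ∑ k ∈ X, p k) ≤ wcCost p w t l := by
  have hsplit : IsFeasibleOrdering p d J t (l.take m ++ l.drop m) := by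
    rwa [List.take_append_drop]
  refine ⟨(l.take m).toFinset, ⟨?_, ?_⟩, ?_⟩
  · rw [← h.toFinset_eq]
    exact fun j hj => List.mem_toFinset.2 (List.mem_of_mem_take (List.mem_toFinset.1 hj))
  · rw [← hsplit.of_append_left.length_eq_card, List.length_take_of_le (h.length_eq_card ▸ hm)]
  · simpa only [List.take_append_drop] using hsplit.OPT_add_OPT_sdiff_le (w := w)

end

theorem stmt1_general {n : ℕ} (p w d : Fin n → ℕ) (J : Finset (Fin n)) {m : ℕ}
    (hm : m ≤ J.card) (t : ℕ) :
    OPT p w d J t =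
      ⨅ (X : Finset (Fin n)) (_ : X ⊆ J ∧ X.card = m),
        (OPT p w d X t + OPT p w d (J \ X) (t + ∑ k ∈ X, p k)) := by
  refine le_antisymm (le_iInf₂ fun X hX => ?_) (le_OPT_iff.2 fun l hl => ?_)
  · simpa only [Finset.union_sdiff_of_subset hX.1] using
      OPT_union_le p w d t (Finset.disjoint_sdiff (s := X) (t := J))
  · obtain ⟨X, hX, hcost⟩ := hl.exists_subset_card_eq_OPT_add_OPT_sdiff_le hm
    exact iInf₂_le_of_le X hX hcost

theorem stmt1 {n : ℕ} (p w d : Fin n → ℕ) (J : Finset (Fin n)) (hJ : Even J.card) (t : ℕ) :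
    OPT p w d J t =
      ⨅ (X : Finset (Fin n)) (_ : X ⊆ J ∧ X.card = J.card / 2),
        (OPT p w d X t + OPT p w d (J \ X) (t + ∑ k ∈ X, p k)) :=
  stmt1_general p w d J (Nat.div_le_self _ _) t
end

section
/- Let n ≥ 1 jobs be given for the 3-machine permutation flowshop with processing times p_{ij} ≥ 0 (real) for i ∈ {1,2,3}, j ∈ {1,…,n}, let π be any permutation of {1,…,n}, and let β ∈ ℝ satisfy β ≥ −min_{i,j} p_{ij}. If p''_{ij} ≥ 0 are processing times satisfying p''_{ij} ≤ p_{ij} + β for all i, j, and C''_max(π) denotes the makespan of π for the processing times p''_{ij}, then C''_max(π) ≤ C_max(π) + β·(n+2), where C_max(π) is the makespan for the processing times p_{ij}. -/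
/-- Completion times of the 3-machine (more generally `m`-machine) permutation
flowshop : `fsC q π i k` is the completion time `C(i,k)` of the `k`-th scheduled
job (1-based) on machine `i` (1-based), for processing times `q i j` and
permutation `π`, defined by
`C(i,k) = max (C(i-1,k)) (C(i,k-1)) + q i (π k)` with `C(0,k) = C(i,0) = 0`. -/
def fsC (q : ℕ → ℕ → ℝ) (π : ℕ → ℕ) : ℕ → ℕ → ℝ
  | 0, _ => 0
  | _ + 1, 0 => 0
  | i + 1, k + 1 =>
      max (fsC q π i (k + 1)) (fsC q π (i + 1) k) + q (i + 1) (π (k + 1))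

/-! The makespan is the weight of a heaviest monotone path through the grid of operations, and with
`m` machines and `n` jobs every such path from the first operation to the last one meets exactly
`m + n - 1` operations. A path that is critical for the new processing times is therefore lighter by
at most `β * (m + n - 1)` for the old ones, and its old weight is a lower bound for the old
makespan. -/

/-- The monotone lattice paths in the grid of operations, used to express completion times as path
weights. A term of `FlowshopPath i k` leads from the first job on machine `1` to the `(k + 1)`-st
scheduled job on machine `i + 1`; the indices are shifted so that every pair of naturals is the end
of a path. -/
inductive FlowshopPath : ℕ → ℕ → Type
  | start : FlowshopPath 0 0
  | nextMachine {i k : ℕ} : FlowshopPath i k → FlowshopPath (i + 1) k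
  | nextJob {i k : ℕ} : FlowshopPath i k → FlowshopPath i (k + 1)

/-- The length of a path in the sense of critical path analysis: the total processing time of the
operations on it, both ends included. In each clause `i` and `k` index the end of the whole path,
not the end of `P`. -/
def FlowshopPath.weight (q : ℕ → ℕ → ℝ) (π : ℕ → ℕ) {i k : ℕ} : FlowshopPath i k → ℝ
  | start => q 1 (π 1)
  | nextMachine P => P.weight q π + q (i + 1) (π (k + 1))
  | nextJob P => P.weight q π + q (i + 1) (π (k + 1))

section CompletionTime

variable (q : ℕ → ℕ → ℝ) (π : ℕ → ℕ) (i k : ℕ)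

theorem fsC_zero_right : fsC q π i 0 = 0 := by
  cases i <;> rw [fsC]

theorem fsC_succ_succ : fsC q π (i + 1) (k + 1) =
    max (fsC q π i (k + 1)) (fsC q π (i + 1) k) + q (i + 1) (π (k + 1)) := by
  rw [fsC]

theorem fsC_prev_machine_add_le :
    fsC q π i (k + 1) + q (i + 1) (π (k + 1)) ≤ fsC q π (i + 1) (k + 1) := by
  rw [fsC_succ_succ]
  gcongr
  exact le_max_left _ _

theorem fsC_prev_job_add_le :
    fsC q π (i + 1) k + q (i + 1) (π (k + 1)) ≤ fsC q π (i + 1) (k + 1) := by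
  rw [fsC_succ_succ]
  gcongr
  exact le_max_right _ _

end CompletionTime

section CriticalPath

variable {p q : ℕ → ℕ → ℝ} {π : ℕ → ℕ} {i k : ℕ} {β : ℝ}

theorem fsC_nonneg (hq : ∀ a < i, ∀ b < k, 0 ≤ q (a + 1) (π (b + 1))) : 0 ≤ fsC q π i k := by
  induction i with
  | zero => rw [fsC]
  | succ i ih =>
    cases k with
    | zero => rw [fsC_zero_right]
    | succ k =>
      have hprev : 0 ≤ fsC q π i (k + 1) := ih fun a ha => hq a (by lia)
      exact (add_nonneg hprev (hq i (by lia) k (by lia))).trans (fsC_prev_machine_add_le ..)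

theorem FlowshopPath.weight_le_fsC (P : FlowshopPath i k) :
    P.weight q π ≤ fsC q π (i + 1) (k + 1) := by
  induction P with
  | start => simp [weight, fsC]
  | @nextMachine i k P ih =>
    exact (add_le_add_left ih _).trans (fsC_prev_machine_add_le q π (i + 1) k)
  | @nextJob i k P ih =>
    exact (add_le_add_left ih _).trans (fsC_prev_job_add_le q π i (k + 1))

theorem FlowshopPath.exists_weight_eq_fsC (hq : ∀ a ≤ i, ∀ b ≤ k, 0 ≤ q (a + 1) (π (b + 1))) :
    ∃ P : FlowshopPath i k, P.weight q π = fsC q π (i + 1) (k + 1) := by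
  induction i generalizing k with
  | zero =>
    induction k with
    | zero => exact ⟨.start, by simp [FlowshopPath.weight, fsC]⟩
    | succ k ihk =>
      obtain ⟨P, hP⟩ := ihk fun a ha b hb => hq a ha b (by lia)
      have hprev : 0 ≤ fsC q π 1 (k + 1) :=
        fsC_nonneg fun a ha b hb => hq a (by lia) b (by lia)
      exact ⟨P.nextJob, by
        rw [FlowshopPath.weight, hP, fsC_succ_succ _ _ _ (k + 1), fsC, max_eq_right hprev]⟩
  | succ i ihi =>
    induction k with
    | zero =>
      obtain ⟨P, hP⟩ := ihi fun a ha b hb => hq a (by lia) b hb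
      have hprev : 0 ≤ fsC q π (i + 1) 1 :=
        fsC_nonneg fun a ha b hb => hq a (by lia) b (by lia)
      exact ⟨P.nextMachine, by
        rw [FlowshopPath.weight, hP, fsC_succ_succ _ _ (i + 1), fsC_zero_right, max_eq_left hprev]⟩
    | succ k ihk =>
      rcases max_choice (fsC q π (i + 1) (k + 1 + 1)) (fsC q π (i + 1 + 1) (k + 1)) with h | h
      · obtain ⟨P, hP⟩ := ihi fun a ha b hb => hq a (by lia) b hb
        exact ⟨P.nextMachine, by rw [FlowshopPath.weight, hP, fsC_succ_succ _ _ (i + 1), h]⟩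
      · obtain ⟨P, hP⟩ := ihk fun a ha b hb => hq a ha b (by lia)
        exact ⟨P.nextJob, by rw [FlowshopPath.weight, hP, fsC_succ_succ _ _ (i + 1) (k + 1), h]⟩

theorem FlowshopPath.weight_le_weight_add (P : FlowshopPath i k)
    (hqp : ∀ a ≤ i, ∀ b ≤ k, q (a + 1) (π (b + 1)) ≤ p (a + 1) (π (b + 1)) + β) :
    P.weight q π ≤ P.weight p π + β * (i + k + 1) := by
  induction P with
  | start => simpa [weight] using hqp 0 le_rfl 0 le_rfl
  | @nextMachine i k P ih =>
    have hprev := ih fun a ha => hqp a (by lia)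
    have hlast := hqp (i + 1) le_rfl k le_rfl
    simp only [weight]
    push_cast
    linarith
  | @nextJob i k P ih =>
    have hprev := ih fun a ha b hb => hqp a ha b (by lia)
    have hlast := hqp i le_rfl (k + 1) le_rfl
    simp only [weight]
    push_cast
    linarith

theorem fsC_le_fsC_add (hq : ∀ a ≤ i, ∀ b ≤ k, 0 ≤ q (a + 1) (π (b + 1)))
    (hqp : ∀ a ≤ i, ∀ b ≤ k, q (a + 1) (π (b + 1)) ≤ p (a + 1) (π (b + 1)) + β) :
    fsC q π (i + 1) (k + 1) ≤ fsC p π (i + 1) (k + 1) + β * (i + k + 1) := by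
  obtain ⟨P, hP⟩ := FlowshopPath.exists_weight_eq_fsC hq
  calc fsC q π (i + 1) (k + 1) = P.weight q π := hP.symm
    _ ≤ P.weight p π + β * (i + k + 1) := P.weight_le_weight_add hqp
    _ ≤ fsC p π (i + 1) (k + 1) + β * (i + k + 1) := by
      gcongr
      exact P.weight_le_fsC

end CriticalPath

theorem stmt11_general {m n : ℕ} (hm : 1 ≤ m) (hn : 1 ≤ n) {p q : ℕ → ℕ → ℝ} {π : ℕ → ℕ}
    (hπ : Set.MapsTo π (Set.Icc 1 n) (Set.Icc 1 n)) {β : ℝ}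
    (hq : ∀ i ∈ Finset.Icc 1 m, ∀ j ∈ Finset.Icc 1 n, 0 ≤ q i j ∧ q i j ≤ p i j + β) :
    fsC q π m n ≤ fsC p π m n + β * (m + n - 1) := by
  obtain ⟨i, rfl⟩ := Nat.exists_eq_add_of_le' hm
  obtain ⟨k, rfl⟩ := Nat.exists_eq_add_of_le' hn
  have hop : ∀ a ≤ i, ∀ b ≤ k, 0 ≤ q (a + 1) (π (b + 1)) ∧
      q (a + 1) (π (b + 1)) ≤ p (a + 1) (π (b + 1)) + β := fun a ha b hb =>
    hq _ (Finset.mem_Icc.2 (by lia)) _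
      (Finset.mem_Icc.2 (hπ (Set.mem_Icc.2 (by lia) : b + 1 ∈ Set.Icc 1 (k + 1))))
  have hcount : ((i + 1 : ℕ) : ℝ) + (k + 1 : ℕ) - 1 = i + k + 1 := by
    push_cast
    ring
  rw [hcount]
  exact fsC_le_fsC_add (fun a ha b hb => (hop a ha b hb).1) fun a ha b hb => (hop a ha b hb).2

theorem stmt11 (n : ℕ) (hn : 1 ≤ n) (p p'' : ℕ → ℕ → ℝ)
    (hp : ∀ i ∈ Finset.Icc 1 3, ∀ j ∈ Finset.Icc 1 n, 0 ≤ p i j)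
    (π : ℕ → ℕ) (hπ : Set.BijOn π (Set.Icc 1 n) (Set.Icc 1 n))
    (β : ℝ) (hβ : ∀ i ∈ Finset.Icc 1 3, ∀ j ∈ Finset.Icc 1 n, -(p i j) ≤ β)
    (hp'' : ∀ i ∈ Finset.Icc 1 3, ∀ j ∈ Finset.Icc 1 n,
      0 ≤ p'' i j ∧ p'' i j ≤ p i j + β) :
    fsC p'' π 3 n ≤ fsC p π 3 n + β * (n + 2) := by
  have h := stmt11_general (by norm_num : 1 ≤ 3) hn hπ.mapsTo hp''
  exact h.trans_eq (by push_cast; ring)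
end

section
/- For all natural numbers n and k with 1 ≤ k and 2k ≤ n, the partial sum of binomial coefficients satisfies ∑_{i=1}^{k} C(n,i) ≤ 2^{H(k/n)·n}, where H(x) = −x·log₂(x) − (1−x)·log₂(1−x) is the binary entropy function. -/
/-- The binary entropy function `H(x) = -x·log₂ x - (1-x)·log₂(1-x)`. -/
noncomputable def binH (x : ℝ) : ℝ :=
  -(x * Real.logb 2 x + (1 - x) * Real.logb 2 (1 - x))

/-!
Toss `n` independent coins of bias `p ≤ 1/2`. The probability `p ^ i * (1 - p) ^ (n - i)` of a
given outcome with `i` heads decreases in `i`, because `p ≤ 1 - p`, and at the mean `i = p * n` it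
is `2 ^ (-(binH p * n))`. So each outcome with at most `p * n` heads has at least this probability,
and since probabilities add up to at most `1` there are at most `2 ^ (binH p * n)` such outcomes.
-/

theorem sum_pow_mul_pow_mul_choose_le_add_pow {R : Type*} [CommSemiring R] [PartialOrder R]
    [IsOrderedRing R] {x y : R} (hx : 0 ≤ x) (hy : 0 ≤ y) {n : ℕ} {s : Finset ℕ}
    (hs : s ⊆ Finset.range (n + 1)) :
    ∑ i ∈ s, x ^ i * y ^ (n - i) * n.choose i ≤ (x + y) ^ n := by
  rw [add_pow]
  exact Finset.sum_le_sum_of_subset_of_nonneg hs fun i _ _ ↦ by positivity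

theorem antitone_rpow_mul_rpow_sub {x y : ℝ} (hx : 0 < x) (hxy : x ≤ y) (c : ℝ) :
    Antitone fun a : ℝ ↦ x ^ a * y ^ (c - a) := by
  intro a b hab
  have hy : 0 < y := hx.trans_le hxy
  calc x ^ b * y ^ (c - b) = x ^ a * x ^ (b - a) * y ^ (c - b) := by
        rw [← Real.rpow_add hx, add_sub_cancel]
    _ ≤ x ^ a * y ^ (b - a) * y ^ (c - b) := by
        gcongr
    _ = x ^ a * y ^ (c - a) := by
        rw [mul_assoc, ← Real.rpow_add hy, sub_add_sub_cancel']

theorem two_rpow_neg_binH_mul {p : ℝ} (hp₀ : 0 < p) (hp₁ : p < 1) (c : ℝ) :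
    (2 : ℝ) ^ (-(binH p * c)) = p ^ (p * c) * (1 - p) ^ (c - p * c) := by
  have two_rpow_logb_mul {x : ℝ} (hx : 0 < x) (a : ℝ) : (2 : ℝ) ^ (Real.logb 2 x * a) = x ^ a := by
    rw [Real.rpow_mul zero_le_two, Real.rpow_logb two_pos (by norm_num) hx]
  rw [← two_rpow_logb_mul hp₀, ← two_rpow_logb_mul (sub_pos.mpr hp₁), ← Real.rpow_add two_pos, binH]
  congr 1
  ring

theorem le_of_cast_le_mul_cast {R : Type*} [Semiring R] [PartialOrder R] [IsStrictOrderedRing R]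
    {p : R} {i n : ℕ} (hp : p ≤ 1) (hi : (i : R) ≤ p * n) : i ≤ n := by
  exact_mod_cast hi.trans (mul_le_of_le_one_left n.cast_nonneg hp)

theorem two_rpow_neg_binH_mul_le {p : ℝ} (hp₀ : 0 < p) (hp : p ≤ 1 / 2) {n i : ℕ}
    (hi : i ≤ p * n) :
    (2 : ℝ) ^ (-(binH p * n)) ≤ p ^ i * (1 - p) ^ (n - i) := by
  have hin : i ≤ n := le_of_cast_le_mul_cast (by linarith) hi
  calc (2 : ℝ) ^ (-(binH p * n)) = p ^ (p * n) * (1 - p) ^ (n - p * n) :=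
        two_rpow_neg_binH_mul hp₀ (by linarith) n
    _ ≤ p ^ (i : ℝ) * (1 - p) ^ ((n : ℝ) - i) :=
        antitone_rpow_mul_rpow_sub hp₀ (by linarith) n hi
    _ = p ^ i * (1 - p) ^ (n - i) := by
        rw [← Nat.cast_sub hin, Real.rpow_natCast, Real.rpow_natCast]

theorem stmt16_general {n k : ℕ} {p : ℝ} (hp₀ : 0 < p) (hp : p ≤ 1 / 2) (hk : k ≤ p * n) :
    ∑ i ∈ Finset.Iic k, (n.choose i : ℝ) ≤ 2 ^ (binH p * n) := by
  have hkn : k ≤ n := le_of_cast_le_mul_cast (by linarith) hk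
  have weighted_sum_le_one :
      2 ^ (-(binH p * n)) * ∑ i ∈ Finset.Iic k, (n.choose i : ℝ) ≤ 1 := by
    calc 2 ^ (-(binH p * n)) * ∑ i ∈ Finset.Iic k, (n.choose i : ℝ)
        = ∑ i ∈ Finset.Iic k, 2 ^ (-(binH p * n)) * (n.choose i : ℝ) := Finset.mul_sum ..
      _ ≤ ∑ i ∈ Finset.Iic k, p ^ i * (1 - p) ^ (n - i) * n.choose i := by
          gcongr with i hi
          have hik : i ≤ k := Finset.mem_Iic.mp hi
          exact two_rpow_neg_binH_mul_le hp₀ hp ((Nat.cast_le.mpr hik).trans hk)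
      _ ≤ (p + (1 - p)) ^ n :=
          sum_pow_mul_pow_mul_choose_le_add_pow hp₀.le (by linarith) fun i hi ↦
            Finset.mem_range_succ_iff.mpr ((Finset.mem_Iic.mp hi).trans hkn)
      _ = 1 := by rw [add_sub_cancel, one_pow]
  rwa [Real.rpow_neg zero_le_two, inv_mul_le_one₀ (by positivity)] at weighted_sum_le_one

theorem stmt16 (n k : ℕ) (hk : 1 ≤ k) (hkn : 2 * k ≤ n) :
    ∑ i ∈ Finset.Icc 1 k, (n.choose i : ℝ) ≤ 2 ^ (binH ((k : ℝ) / n) * n) := by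
  have hn : (0 : ℝ) < n := by exact_mod_cast (by omega : 0 < n)
  have hp : (k : ℝ) / n ≤ 1 / 2 := by
    rw [div_le_div_iff₀ hn two_pos]
    exact_mod_cast (by omega : k * 2 ≤ 1 * n)
  calc ∑ i ∈ Finset.Icc 1 k, (n.choose i : ℝ)
      ≤ ∑ i ∈ Finset.Iic k, (n.choose i : ℝ) := by gcongr; exact Finset.Icc_subset_Iic_self
    _ ≤ 2 ^ (binH ((k : ℝ) / n) * n) :=
      stmt16_general (by positivity) hp (div_mul_cancel₀ _ hn.ne').ge
end

section
/- Let n jobs be given, where job j has processing time p_j ∈ ℕ, weight w_j ∈ ℕ and release date r_j ∈ ℕ. For J ⊆ {1,…,n}, t ∈ ℕ∞ and ε ∈ ℤ, define OPT'[J,t,ε] ∈ ℕ∞ as the minimum makespan over all schedules of J starting at time t whose total weighted completion time ∑_{j∈J} w_j·C_j equals ε; set OPT'[J,t,ε] = ∞ if t = ∞, if ε < 0, or if no such schedule exists. Then for every J ⊆ {1,…,n} of even cardinality |J| ≥ 2, every t ∈ ℕ and every ε ∈ ℤ, OPT'[J,t,ε] = min over all ε' ∈ ℤ with 0 ≤ ε'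 ≤ ε and all X ⊆ J with |X| = |J|/2 of OPT'[X, OPT'[J∖X, t, ε − ε'], ε']. -/
/-- `ValidFrom p r t s` : the list `s` of pairs (job, completion time) is a valid
schedule starting at time `t` : the first job `j` satisfies
`C_j ≥ max t (r j) + p j`, and each further job `j` satisfies
`C_j ≥ max C_prev (r j) + p j` (idle time is allowed). -/
def ValidFrom {n : ℕ} (p r : Fin n → ℕ) : ℕ → List (Fin n × ℕ) → Prop
  | _, [] => True
  | t, (j, c) :: s => max t (r j) + p j ≤ c ∧ ValidFrom p r c s

/-- The makespan of a schedule : the completion time of its last job. -/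
def makespan {n : ℕ} (s : List (Fin n × ℕ)) : ℕ :=
  ((s.map Prod.snd).getLast?).getD 0

/-- The total weighted completion time `∑_j w j * C j` of a schedule. -/
def totalWC {n : ℕ} (w : Fin n → ℕ) (s : List (Fin n × ℕ)) : ℕ :=
  (s.map fun jc => w jc.1 * jc.2).sum

/-- `OPT' p w r J t ε` : minimum makespan over all schedules of the jobs of `J`
starting at time `t` whose total weighted completion time equals `ε`
(`⊤` if `t = ⊤`, if `ε < 0`, or if no such schedule exists). -/
noncomputable def OPT' {n : ℕ} (p w r : Fin n → ℕ) (J : Finset (Fin n))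
    (t : ℕ∞) (ε : ℤ) : ℕ∞ :=
  sInf { v : ℕ∞ | ∃ t₀ : ℕ, (t₀ : ℕ∞) = t ∧ ∃ s : List (Fin n × ℕ),
    (s.map Prod.fst).Nodup ∧ (s.map Prod.fst).toFinset = J ∧
    ValidFrom p r t₀ s ∧ (totalWC w s : ℤ) = ε ∧ v = (makespan s : ℕ∞) }

/-
Cutting a schedule of `J` before its last `k` jobs, a set `X`, gives a schedule of `J \ X` from `t`
followed by a schedule of `X` from the makespan of the first part, and the weighted completion times
add up. Conversely two such parts concatenate, and the second part only profits if the first one is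
replaced by a schedule that ends earlier, because idle time is allowed. Both parts must be nonempty:
the makespan of the empty schedule is `0` here, not its starting time.
-/

section Schedule

variable {n k m t t' : ℕ} {p w r : Fin n → ℕ} {J X Y : Finset (Fin n)}
  {s s₁ s₂ : List (Fin n × ℕ)}

theorem ValidFrom.anti (h : t' ≤ t) (hs : ValidFrom p r t s) : ValidFrom p r t' s :=
  match s, hs with
  | [], _ => trivial
  | (_, _) :: _, ⟨hle, hs⟩ => ⟨(Nat.add_le_add_right (max_le_max_right _ h) _).trans hle, hs⟩

theorem makespan_append (s₁ : List (Fin n × ℕ)) (h : s₂ ≠ []) :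
    makespan (s₁ ++ s₂) = makespan s₂ := by
  simp [makespan, List.getLast?_append, List.getLast?_eq_some_getLast h]

theorem totalWC_append (w : Fin n → ℕ) (s₁ s₂ : List (Fin n × ℕ)) :
    totalWC w (s₁ ++ s₂) = totalWC w s₁ + totalWC w s₂ := by
  simp [totalWC]

theorem validFrom_append_iff (h : s₁ ≠ []) :
    ValidFrom p r t (s₁ ++ s₂) ↔ ValidFrom p r t s₁ ∧ ValidFrom p r (makespan s₁) s₂ := by
  induction s₁ generalizing t with
  | nil => exact absurd rfl h
  | cons a s ih =>
    rcases eq_or_ne s [] with rfl | hs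
    · simp [ValidFrom, makespan]
    · rw [show makespan (a :: s) = makespan s from makespan_append [a] hs]
      exact (and_congr_right' (ih hs)).trans and_assoc.symm

/-- `IsSchedule p r J t s`: the list `s` of pairs (job, completion time) is a schedule of the set
`J` of jobs starting at time `t`, that is, a competitor in the minimum defining `OPT' p w r J t`. -/
structure IsSchedule (p r : Fin n → ℕ) (J : Finset (Fin n)) (t : ℕ)
    (s : List (Fin n × ℕ)) : Prop where
  nodup : (s.map Prod.fst).Nodup
  toFinset_eq : (s.map Prod.fst).toFinset = J
  validFrom : ValidFrom p r t s

namespace IsSchedule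

theorem anti (h : t' ≤ t) (hs : IsSchedule p r J t s) : IsSchedule p r J t' s :=
  { hs with validFrom := hs.validFrom.anti h }

theorem card_eq_length (hs : IsSchedule p r J t s) : J.card = s.length := by
  rw [← hs.toFinset_eq, List.toFinset_card_of_nodup hs.nodup, List.length_map]

theorem ne_nil (hs : IsSchedule p r J t s) (hJ : J.Nonempty) : s ≠ [] :=
  List.ne_nil_of_length_pos (hs.card_eq_length ▸ hJ.card_pos)

theorem append (hs₁ : IsSchedule p r Y t s₁) (hs₂ : IsSchedule p r X (makespan s₁) s₂)
    (hY : Y.Nonempty) (hYX : Disjoint Y X) : IsSchedule p r (Y ∪ X) t (s₁ ++ s₂) where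
  nodup := by
    rw [List.map_append]
    refine hs₁.nodup.append hs₂.nodup ?_
    rwa [← List.disjoint_toFinset_iff_disjoint, hs₁.toFinset_eq, hs₂.toFinset_eq]
  toFinset_eq := by
    rw [List.map_append, List.toFinset_append, hs₁.toFinset_eq, hs₂.toFinset_eq]
  validFrom := (validFrom_append_iff (hs₁.ne_nil hY)).2 ⟨hs₁.validFrom, hs₂.validFrom⟩

theorem exists_of_append (hs : IsSchedule p r J t (s₁ ++ s₂)) (hs₁ : s₁ ≠ []) :
    ∃ X ⊆ J, IsSchedule p r (J \ X) t s₁ ∧ IsSchedule p r X (makespan s₁) s₂ := by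
  obtain ⟨hnodup, rfl, hvalid⟩ := hs
  obtain ⟨hvalid₁, hvalid₂⟩ := (validFrom_append_iff hs₁).1 hvalid
  rw [List.map_append] at hnodup ⊢
  obtain ⟨hnodup₁, hnodup₂, hdisj⟩ := List.nodup_append'.1 hnodup
  rw [List.toFinset_append]
  refine ⟨_, Finset.subset_union_right, ⟨hnodup₁, ?_, hvalid₁⟩, hnodup₂, rfl, hvalid₂⟩
  exact (Finset.union_sdiff_cancel_right (List.disjoint_toFinset_iff_disjoint.2 hdisj)).symm

theorem exists_eq_append (hs : IsSchedule p r J t s) (hkJ : k < J.card) :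
    ∃ X ⊆ J, X.card = k ∧ ∃ s₁ s₂, s = s₁ ++ s₂ ∧
      IsSchedule p r (J \ X) t s₁ ∧ IsSchedule p r X (makespan s₁) s₂ := by
  rw [hs.card_eq_length] at hkJ
  have hsplit := List.take_append_drop (s.length - k) s
  have hne : s.take (s.length - k) ≠ [] :=
    List.ne_nil_of_length_pos (by rw [List.length_take]; omega)
  obtain ⟨X, hXJ, h₁, h₂⟩ := exists_of_append (hsplit.symm ▸ hs) hne
  refine ⟨X, hXJ, ?_, _, _, hsplit.symm, h₁, h₂⟩
  rw [h₂.card_eq_length, List.length_drop]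
  omega

end IsSchedule

variable {τ : ℕ∞} {ε ε₁ ε₂ : ℤ}

theorem OPT'_le_natCast_iff :
    OPT' p w r J τ ε ≤ m ↔
      ∃ t : ℕ, τ ≤ t ∧ ∃ s, IsSchedule p r J t s ∧ (totalWC w s : ℤ) = ε ∧ makespan s ≤ m := by
  constructor
  · intro h
    have hne_top : OPT' p w r J τ ε ≠ ⊤ := ne_top_of_le_ne_top (ENat.natCast_ne_top m) h
    obtain ⟨t, rfl, s, hnodup, hJ, hvalid, hε, hmin⟩ :=
      csInf_mem (Set.nonempty_iff_ne_empty.2 fun hempty =>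
        hne_top ((congrArg sInf hempty).trans sInf_empty))
    exact ⟨t, le_rfl, s, ⟨hnodup, hJ, hvalid⟩, hε, Nat.cast_le.1 (hmin.symm.trans_le h)⟩
  · rintro ⟨t, hτt, s, hs, hε, hm⟩
    lift τ to ℕ using ne_top_of_le_ne_top (ENat.natCast_ne_top t) hτt
    have hs' := hs.anti (Nat.cast_le.1 hτt)
    have hle : OPT' p w r J τ ε ≤ makespan s :=
      sInf_le ⟨τ, rfl, s, hs'.nodup, hs'.toFinset_eq, hs'.validFrom, hε, rfl⟩
    exact hle.trans (Nat.cast_le.2 hm)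

theorem OPT'_union_le (hY : Y.Nonempty) (hX : X.Nonempty) (hYX : Disjoint Y X) :
    OPT' p w r (Y ∪ X) τ (ε₁ + ε₂) ≤ OPT' p w r X (OPT' p w r Y τ ε₁) ε₂ := by
  refine WithTop.forall_le_coe_iff_le.1 fun m hm => ?_
  obtain ⟨t₁, ht₁, s₂, hs₂, rfl, hm⟩ := OPT'_le_natCast_iff.1 hm
  obtain ⟨t, hτt, s₁, hs₁, rfl, hst₁⟩ := OPT'_le_natCast_iff.1 ht₁
  refine OPT'_le_natCast_iff.2
    ⟨t, hτt, s₁ ++ s₂, hs₁.append (hs₂.anti hst₁) hY hYX, ?_, ?_⟩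
  · exact_mod_cast totalWC_append w s₁ s₂
  · rwa [makespan_append s₁ (hs₂.ne_nil hX)]

theorem exists_OPT'_OPT'_le (hk : 0 < k) (hkJ : k < J.card) (h : OPT' p w r J τ ε ≤ m) :
    ∃ ε', (0 ≤ ε' ∧ ε' ≤ ε) ∧ ∃ X, (X ⊆ J ∧ X.card = k) ∧
      OPT' p w r X (OPT' p w r (J \ X) τ (ε - ε')) ε' ≤ m := by
  obtain ⟨t, hτt, s, hs, rfl, hm⟩ := OPT'_le_natCast_iff.1 h
  obtain ⟨X, hXJ, hXk, s₁, s₂, rfl, hs₁, hs₂⟩ := hs.exists_eq_append hkJ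
  rw [makespan_append s₁ (hs₂.ne_nil (Finset.card_pos.1 (hXk ▸ hk)))] at hm
  rw [totalWC_append]
  refine ⟨totalWC w s₂, by omega, X, ⟨hXJ, hXk⟩, OPT'_le_natCast_iff.2
    ⟨makespan s₁, OPT'_le_natCast_iff.2 ⟨t, hτt, s₁, hs₁, ?_, le_rfl⟩, s₂, hs₂, rfl, hm⟩⟩
  push_cast
  ring

end Schedule

theorem stmt19_general {n : ℕ} (p w r : Fin n → ℕ) (J : Finset (Fin n)) {k : ℕ}
    (hk : 0 < k) (hkJ : k < J.card) (τ : ℕ∞) (ε : ℤ) :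
    OPT' p w r J τ ε =
      ⨅ (ε' : ℤ) (_ : 0 ≤ ε' ∧ ε' ≤ ε) (X : Finset (Fin n)) (_ : X ⊆ J ∧ X.card = k),
        OPT' p w r X (OPT' p w r (J \ X) τ (ε - ε')) ε' := by
  apply le_antisymm
  · refine le_iInf₂ fun ε' _ => le_iInf₂ fun X ⟨hXJ, hXk⟩ => ?_
    have hX : X.Nonempty := Finset.card_pos.1 (hXk ▸ hk)
    have hJX : (J \ X).Nonempty := Finset.sdiff_nonempty_of_card_lt_card (hXk ▸ hkJ)
    calc OPT' p w r J τ ε = OPT' p w r (J \ X ∪ X) τ (ε - ε' + ε') := by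
          rw [Finset.sdiff_union_of_subset hXJ, sub_add_cancel]
      _ ≤ _ := OPT'_union_le hJX hX Finset.sdiff_disjoint
  · refine WithTop.forall_le_coe_iff_le.1 fun m hm => ?_
    obtain ⟨ε', hε', X, hX, hle⟩ := exists_OPT'_OPT'_le hk hkJ hm
    exact iInf₂_le_of_le ε' hε' (iInf₂_le_of_le X hX hle)

theorem stmt19 {n : ℕ} (p w r : Fin n → ℕ) (J : Finset (Fin n))
    (hJcard : 2 ≤ J.card) (hJeven : Even J.card) (t : ℕ) (ε : ℤ) :
    OPT' p w r J (t : ℕ∞) ε =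
      ⨅ (ε' : ℤ) (_ : 0 ≤ ε' ∧ ε' ≤ ε) (X : Finset (Fin n))
          (_ : X ⊆ J ∧ X.card = J.card / 2),
        OPT' p w r X (OPT' p w r (J \ X) (t : ℕ∞) (ε - ε')) ε' :=
  stmt19_general p w r J (by omega) (by omega) t ε
end
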